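/- For every subset N of ℕ^m satisfying N + ℕ^m = N there exists a unique smallest finite subset V of N such that V + ℕ^m = N; that is, V is finite, V + ℕ^m = N, and V is contained in every subset W of N with W + ℕ^m = N. -/

import Mathlib

open Pointwise

/-- For every subset `N` of `ℕ^m` with `N + ℕ^m = N` there is a unique smallest finite
subset `V` of `N` with `V + ℕ^m = N`; i.e. `V` is finite, generates `N`, and is contained
in every subset `W` of `N` with `W + ℕ^m = N`. -/
theorem stmt1 {m : ℕ} (N : Set (Fin m → ℕ)) (hN : N + (Set.univ : Set (Fin m → ℕ)) = N) :
    ∃! V : Set (Fin m → ℕ),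
      V.Finite ∧ V ⊆ N ∧ V + (Set.univ : Set (Fin m → ℕ)) = N ∧
        ∀ W : Set (Fin m → ℕ), W ⊆ N → W + (Set.univ : Set (Fin m → ℕ)) = N → V ⊆ W := by
  have key : ∀ V : Set (Fin m → ℕ), V = {x | Minimal (· ∈ N) x} → (V.Finite ∧ V ⊆ N ∧
      V + (Set.univ : Set (Fin m → ℕ)) = N ∧
        ∀ W : Set (Fin m → ℕ), W ⊆ N → W + (Set.univ : Set (Fin m → ℕ)) = N → V ⊆ W) := by
    rintro V rfl
    refine ⟨?_, fun x hx => hx.1, ?_, ?_⟩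
    · exact WellQuasiOrderedLE.finite_of_isAntichain (setOfPred_minimal_antichain _)
    · apply Set.Subset.antisymm
      · rintro _ ⟨a, ha, b, hb, rfl⟩
        rw [← hN]
        exact Set.add_mem_add ha.1 hb
      · intro x hx
        obtain ⟨b, hb, hmin⟩ := exists_minimal_le_of_wellFoundedLT (· ∈ N) x hx
        exact ⟨b, hmin, x - b, trivial, add_tsub_cancel_of_le hb⟩
    · intro W hW hWN x hx
      have h := hx.1
      rw [← hWN] at h
      obtain ⟨w, hw, b, -, rfl⟩ := h
      have hle : w ≤ w + b := le_self_add
      have this : w = w + b := le_antisymm hle (hx.2 (hW hw) hle)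
      change w + b ∈ W
      rw [← this]
      exact hw
  obtain ⟨h1, h2, h3, h4⟩ := key _ rfl
  refine ⟨_, ⟨h1, h2, h3, h4⟩, ?_⟩
  rintro V ⟨-, k2, k3, k4⟩
  exact Set.Subset.antisymm (k4 _ h2 h3) (h4 _ k2 k3)
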